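/- arXiv:2504.11484 — 6 statements merged into one kernel-verified Lean document; each statement's English description precedes it below -/
import Mathlib

section
/- In any economy, a bilateral trajectory I never revisits an earlier state non-trivially: if I (t+k) = I t for some t and some k ≥ 1, then I s = I t for every s with t ≤ s ≤ t+k (there are no non-trivial cycles in the trading process). -/
/-!
Every step of a bilateral trajectory leaves each agent weakly better off
(`weak_improve_step`): the two trading agents strictly gain and nobody else is affected.
Weak preference is transitive, so each agent's holdings are weakly increasing in time
(`weak_improve_of_le`). Along a cycle, each agent's bundle at an intermediate time is thus
both weakly better and weakly worse than the initial one, and asymmetry forces equality.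
-/

/-- An economy: `n` agents with strict preference relations over bundles
(finsets) of resources, satisfying asymmetry, transitivity, and
completeness for distinct bundles. -/
structure Economy (n : ℕ) (R : Type*) where
  W : Fin n → Finset R → Finset R → Prop
  asymm : ∀ i A B, W i A B → ¬ W i B A
  trans : ∀ i A B C, W i A B → W i B C → W i A C
  total : ∀ i A B, A ≠ B → W i A B ∨ W i B A

/-- A distribution: pairwise disjoint bundles covering all resources. -/
def IsDistribution {n : ℕ} {R : Type*} (d : Fin n → Finset R) : Prop :=
  (∀ i j, i ≠ j → Disjoint (d i) (d j)) ∧ ∀ r : R, ∃ i, r ∈ d i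

/-- A mutually beneficial bilateral trade exists from `d`. -/
def TradeExists {n : ℕ} {R : Type*} [DecidableEq R]
    (E : Economy n R) (d : Fin n → Finset R) : Prop :=
  ∃ i j : Fin n, i ≠ j ∧ ∃ R1 R2 : Finset R,
    R1 ⊆ d i ∧ R2 ⊆ d j ∧ E.W i R1 R2 ∧ E.W j R2 R1 ∧
    E.W i (d i) (d i \ R1 ∪ R2) ∧ E.W j (d j) (d j \ R2 ∪ R1)

/-- A bilateral trajectory: each state is a distribution; rule (C1) executes
some mutually beneficial bilateral trade whenever one exists, and rule (C2)
stagnates otherwise. -/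
def BilateralTrajectory {n : ℕ} {R : Type*} [DecidableEq R]
    (E : Economy n R) (I : ℕ → Fin n → Finset R) : Prop :=
  (∀ t, IsDistribution (I t)) ∧
  ∀ t,
    (TradeExists E (I t) →
      ∃ i j : Fin n, i ≠ j ∧ ∃ R1 R2 : Finset R,
        R1 ⊆ I t i ∧ R2 ⊆ I t j ∧ E.W i R1 R2 ∧ E.W j R2 R1 ∧
        E.W i (I t i) (I t i \ R1 ∪ R2) ∧ E.W j (I t j) (I t j \ R2 ∪ R1) ∧
        I (t+1) i = I t i \ R1 ∪ R2 ∧ I (t+1) j = I t j \ R2 ∪ R1 ∧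
        ∀ z, z ≠ i → z ≠ j → I (t+1) z = I t z) ∧
    (¬ TradeExists E (I t) → I (t+1) = I t)

/-- `d'` Pareto-dominates `d`. -/
def ParetoDominates {n : ℕ} {R : Type*} (E : Economy n R)
    (d' d : Fin n → Finset R) : Prop :=
  d' ≠ d ∧ (∃ q, E.W q (d q) (d' q)) ∧ ∀ z, ¬ E.W z (d' z) (d z)

/-- `d` is Pareto optimal: no distribution Pareto-dominates it. -/
def ParetoOptimal {n : ℕ} {R : Type*} (E : Economy n R)
    (d : Fin n → Finset R) : Prop :=
  ∀ d', IsDistribution d' → ¬ ParetoDominates E d' d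

/-- An ideal trajectory: (D1) if some distribution Pareto-dominates the current
state, the next state Pareto-dominates it; (D2) Pareto optimal states stagnate. -/
def IdealTrajectory {n : ℕ} {R : Type*} (E : Economy n R)
    (I : ℕ → Fin n → Finset R) : Prop :=
  (∀ t, IsDistribution (I t)) ∧
  ∀ t,
    ((∃ d, IsDistribution d ∧ ParetoDominates E d (I t)) →
      ParetoDominates E (I (t+1)) (I t)) ∧
    (ParetoOptimal E (I t) → I (t+1) = I t)

theorem weak_improve_step {n : ℕ} {R : Type*} [DecidableEq R]
    {E : Economy n R} {I : ℕ → Fin n → Finset R} (hI : BilateralTrajectory E I)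
    (s : ℕ) (z : Fin n) : I s z = I (s+1) z ∨ E.W z (I s z) (I (s+1) z) := by
  by_cases h : TradeExists E (I s)
  · obtain ⟨i, j, -, R1, R2, -, -, -, -, hi, hj, ei, ej, ez⟩ := (hI.2 s).1 h
    by_cases hzi : z = i
    · subst hzi
      exact Or.inr (ei ▸ hi)
    by_cases hzj : z = j
    · subst hzj
      exact Or.inr (ej ▸ hj)
    exact Or.inl (ez z hzi hzj).symm
  · exact Or.inl (congrFun ((hI.2 s).2 h) z).symm

theorem weak_improve_of_le {n : ℕ} {R : Type*} [DecidableEq R]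
    {E : Economy n R} {I : ℕ → Fin n → Finset R} (hI : BilateralTrajectory E I)
    {s u : ℕ} (hsu : s ≤ u) (z : Fin n) : I s z = I u z ∨ E.W z (I s z) (I u z) := by
  induction u, hsu using Nat.le_induction with
  | base => exact Or.inl rfl
  | succ u _ ih =>
    rcases ih with h | h <;> rcases weak_improve_step hI u z with h' | h'
    · exact Or.inl (h.trans h')
    · exact Or.inr (h ▸ h')
    · exact Or.inr (h' ▸ h)
    · exact Or.inr (E.trans z _ _ _ h h')

theorem bilateral_no_nontrivial_cycles
    {n : ℕ} {R : Type*} [Fintype R] [DecidableEq R]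
    (E : Economy n R) (I : ℕ → Fin n → Finset R)
    (hI : BilateralTrajectory E I)
    (t k : ℕ) (hk : 1 ≤ k) (hcyc : I (t+k) = I t) :
    ∀ s, t ≤ s → s ≤ t + k → I s = I t := by
  intro s hs hs'
  funext z
  rcases weak_improve_of_le hI hs z with h | h
  · exact h.symm
  have h2 := weak_improve_of_le hI hs' z
  rw [hcyc] at h2
  rcases h2 with h2 | h2
  · exact h2
  · exact absurd h2 (E.asymm z _ _ h)
end

section
/- (Convergence Lemma) In any economy, every bilateral trajectory stabilizes in finitely many steps: for every bilateral trajectory I there exists t ∈ ℕ such that for all k ∈ ℕ, I (t+k) = I t. -/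
open Classical in
/-- The number of bundles to which agent `i` strictly prefers `A`. -/
noncomputable def Economy.rank {n : ℕ} {R : Type*} [Fintype R]
    (E : Economy n R) (i : Fin n) (A : Finset R) : ℕ :=
  (Finset.univ.filter fun B => E.W i B A).card

/-- The sum of the ranks of the bundles held by the agents. -/
noncomputable def Economy.welfare {n : ℕ} {R : Type*} [Fintype R]
    (E : Economy n R) (d : Fin n → Finset R) : ℕ :=
  ∑ i, E.rank i (d i)

theorem rank_lt_rank {n : ℕ} {R : Type*} [Fintype R]
    (E : Economy n R) {i : Fin n} {A B : Finset R} (h : E.W i A B) :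
    E.rank i A < E.rank i B := by
  classical
  unfold Economy.rank
  apply Finset.card_lt_card
  rw [Finset.ssubset_iff_of_subset]
  · exact ⟨A, by simpa using h, by simpa using fun hA => E.asymm i A A hA hA⟩
  · intro C hC
    simp only [Finset.mem_filter, Finset.mem_univ, true_and] at hC ⊢
    exact E.trans i C A B hC h

theorem welfare_le {n : ℕ} {R : Type*} [Fintype R]
    (E : Economy n R) (d : Fin n → Finset R) :
    E.welfare d ≤ ∑ _i : Fin n, Fintype.card (Finset R) := by
  classical
  exact Finset.sum_le_sum fun i _ => Finset.card_le_univ _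

theorem welfare_lt_of_trade {n : ℕ} {R : Type*} [Fintype R] [DecidableEq R]
    (E : Economy n R) (I : ℕ → Fin n → Finset R) (hI : BilateralTrajectory E I)
    {t : ℕ} (ht : TradeExists E (I t)) :
    E.welfare (I t) < E.welfare (I (t + 1)) := by
  obtain ⟨i, j, -, R1, R2, -, -, -, -, hi, hj, hi', hj', hz⟩ := (hI.2 t).1 ht
  rw [← hi'] at hi
  rw [← hj'] at hj
  refine Finset.sum_lt_sum (fun z _ => ?_) ⟨i, Finset.mem_univ i, rank_lt_rank E hi⟩
  by_cases h1 : z = i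
  · subst h1
    exact (rank_lt_rank E hi).le
  by_cases h2 : z = j
  · subst h2
    exact (rank_lt_rank E hj).le
  rw [hz z h1 h2]

/-- Convergence Lemma: every bilateral trajectory stabilizes in finitely many
steps. -/
theorem bilateral_convergence
    {n : ℕ} {R : Type*} [Fintype R] [DecidableEq R]
    (E : Economy n R) (I : ℕ → Fin n → Finset R)
    (hI : BilateralTrajectory E I) :
    ∃ t, ∀ k, I (t+k) = I t := by
  obtain ⟨t, hmax⟩ : ∃ t, ∀ s, E.welfare (I s) ≤ E.welfare (I t) := by
    have hfin : (Set.range fun t => E.welfare (I t)).Finite :=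
      (Set.finite_Iic _).subset (Set.range_subset_iff.2 fun t => welfare_le E (I t))
    obtain ⟨_, ⟨t, rfl⟩, h⟩ := Set.exists_max_image _ id hfin (Set.range_nonempty _)
    exact ⟨t, fun s => h _ ⟨s, rfl⟩⟩
  refine ⟨t, fun k => ?_⟩
  induction k with
  | zero => rfl
  | succ k ih =>
    have hno : ¬ TradeExists E (I (t + k)) := fun htr => by
      have hlt := welfare_lt_of_trade E I hI htr
      rw [ih] at hlt
      exact absurd (hmax (t + k + 1)) hlt.not_ge
    exact ((hI.2 (t + k)).2 hno).trans ih
end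

section
/- (Failure of invariance of the ultimate outcome) Let n ≥ 2 and let R be a one-element resource type with unique element x. Give each agent i the strict preference relation W i with W i ∅ {x} and no other related pairs (this satisfies asymmetry, transitivity, and completeness for distinct bundles). Then every distribution in this economy is a fixed point of the bilateral dynamics (no mutually beneficial bilateral trade exists from any distribution), and consequently any two bilateral trajectories I and I' whose initial distributions I 0 and I' 0 are distinct satisfy I t ≠ I' t' for all t, t' ∈ ℕ. In particular, distinct initial distributions can converge to distinct ultimate distributions. -/
/-- Failure of invariance of the ultimate outcome: with one resource `x` and
each agent preferring `{x}` to `∅` (and no other related pairs), every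
distribution is a fixed point of the bilateral dynamics, so trajectories
started at distinct distributions never meet. -/
theorem failure_of_invariance
    {n : ℕ} (hn : 2 ≤ n) {R : Type*} [Fintype R] [DecidableEq R]
    (x : R) (hx : ∀ r : R, r = x)
    (E : Economy n R)
    (hW : ∀ i A B, E.W i A B ↔ (A = ∅ ∧ B = {x})) :
    (∀ d : Fin n → Finset R, IsDistribution d → ¬ TradeExists E d) ∧
    (∀ I I' : ℕ → Fin n → Finset R,
      BilateralTrajectory E I → BilateralTrajectory E I' →
      I 0 ≠ I' 0 → ∀ t t', I t ≠ I' t') := by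
  -- In a trade, the two traders rank the exchanged bundles `R1`, `R2` in opposite ways; as all
  -- agents have the same preference, this would force `R1 = ∅` and `R1 = {x}`.
  have no_trade : ∀ d : Fin n → Finset R, ¬ TradeExists E d := by
    rintro d ⟨i, j, -, R1, R2, -, -, h1, h2, -⟩
    have he : R1 = ∅ := ((hW i R1 R2).1 h1).1
    have hs : R1 = {x} := ((hW j R2 R1).1 h2).2
    exact Finset.singleton_ne_empty x (hs.symm.trans he)
  -- Hence only the stagnation rule ever applies.
  have const : ∀ I, BilateralTrajectory E I → ∀ t, I t = I 0 := by
    intro I hI t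
    induction t with
    | zero => rfl
    | succ t ih => rw [(hI.2 t).2 (no_trade _), ih]
  refine ⟨fun d _ => no_trade d, fun I I' hI hI' h0 t t' h => h0 ?_⟩
  rw [← const I hI t, ← const I' hI' t', h]
end

section
/- (Failure of Pareto optimality of ultimate distributions) There exist an economy with 3 agents and 3 resources x, y, z, strict preference relations W 0, W 1, W 2 satisfying asymmetry, transitivity, and completeness for distinct bundles, and two distributions d and d' with d ≠ d', such that: (i) no mutually beneficial bilateral trade exists from d (hence any bilateral trajectory starting at d is constantly equal to d, so d is an ultimate distribution of the bilateral dynamics); and (ii) every agent i strictly prefers d' to d, i.e. W i (d i) (d' i) for all i. In particular, d is not Pareto optimal. Concretely one may take d = ({x}, {z}, {y}) and d' = ({y}, {x}, {z}) with the rankings: agent 0 ranks ∅ < {z} < {x} < {y} < {z,x} < {z,y} < {x,y} < {x,y,z}; agent 1 ranks ∅ < {y} < {z} < {x} < {y,z} < {y,x} < {z,x} < {x,y,z}; agent 2 ranks ∅ < {x} < {y} < {z} < {x,y} < {x,z} < {y,z} < {x,y,z}. -/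
/-- `itemValue i r` is the value agent `i` assigns to resource `r`. -/
def itemValue : Fin 3 → Fin 3 → ℕ :=
  ![![4, 5, 3], ![5, 3, 4], ![3, 4, 5]]

/-- The additive utility of a bundle for agent `i`. -/
def bundleValue (i : Fin 3) (A : Finset (Fin 3)) : ℕ :=
  ∑ r ∈ A, itemValue i r

lemma bundleValue_injective : ∀ i A B, bundleValue i A = bundleValue i B → A = B := by
  decide

/-- The economy in which each agent prefers the bundle of larger value. -/
def cyclicEconomy : Economy 3 (Fin 3) where
  W i A B := bundleValue i A < bundleValue i B
  asymm _ _ _ h := h.asymm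
  trans _ _ _ _ h₁ h₂ := h₁.trans h₂
  total i A B h := lt_or_gt_of_ne fun he => h (bundleValue_injective i A B he)

/-- The stable distribution `({x}, {z}, {y})`. -/
def stableDist : Fin 3 → Finset (Fin 3) := ![{0}, {2}, {1}]

/-- The distribution `({y}, {x}, {z})`, giving every agent its favourite item. -/
def rotatedDist : Fin 3 → Finset (Fin 3) := ![{1}, {0}, {2}]

lemma isDistribution_stableDist : IsDistribution stableDist := by
  unfold IsDistribution; decide

lemma isDistribution_rotatedDist : IsDistribution rotatedDist := by
  unfold IsDistribution; decide

lemma stableDist_lt_rotatedDist :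
    ∀ i, bundleValue i (stableDist i) < bundleValue i (rotatedDist i) := by
  decide

/-- No exchange between two agents raises the total value of both holdings, so `stableDist` admits
no mutually beneficial bilateral trade. -/
lemma no_mutual_gain : ∀ i j : Fin 3, i ≠ j → ∀ R1 ⊆ stableDist i, ∀ R2 ⊆ stableDist j,
    bundleValue i (stableDist i) < bundleValue i (stableDist i \ R1 ∪ R2) →
    ¬ bundleValue j (stableDist j) < bundleValue j (stableDist j \ R2 ∪ R1) := by
  decide

/-- Failure of Pareto optimality of ultimate distributions: there is an economy
with 3 agents and 3 resources, a stable distribution `d` (no mutually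
beneficial bilateral trade exists from it) and a distribution `d'` that every
agent strictly prefers; in particular `d` is not Pareto optimal. -/
theorem failure_of_pareto_optimality :
    ∃ (E : Economy 3 (Fin 3)) (d d' : Fin 3 → Finset (Fin 3)),
      IsDistribution d ∧ IsDistribution d' ∧ d ≠ d' ∧
      ¬ TradeExists E d ∧
      (∀ i : Fin 3, E.W i (d i) (d' i)) ∧
      ¬ ParetoOptimal E d := by
  have hne : stableDist ≠ rotatedDist := by decide
  refine ⟨cyclicEconomy, stableDist, rotatedDist, isDistribution_stableDist,
    isDistribution_rotatedDist, hne, ?_, stableDist_lt_rotatedDist, ?_⟩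
  · rintro ⟨i, j, hij, R1, R2, h1, h2, -, -, h3, h4⟩
    exact no_mutual_gain i j hij R1 h1 R2 h2 h3 h4
  · intro h
    exact h rotatedDist isDistribution_rotatedDist
      ⟨hne.symm, ⟨0, stableDist_lt_rotatedDist 0⟩,
        fun z => cyclicEconomy.asymm z _ _ (stableDist_lt_rotatedDist z)⟩
end

section
/- In any economy, every distribution is weakly dominated by a Pareto optimal distribution: for every distribution d there exists a Pareto optimal distribution e such that e = d or e Pareto-dominates d. -/
theorem ParetoDominates.trans {n : ℕ} {R : Type*} {E : Economy n R}
    {a b c : Fin n → Finset R} (hab : ParetoDominates E a b) (hbc : ParetoDominates E b c) :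
    ParetoDominates E a c := by
  -- By completeness and asymmetry, "not worse off" means "same bundle or strictly better off".
  have key : ∀ z, ¬ E.W z (a z) (c z) := by
    intro z hz
    have h1 := hab.2.2 z
    by_cases h : b z = c z
    · exact h1 (h ▸ hz)
    · rcases E.total z _ _ h with h' | h'
      · exact hbc.2.2 z h'
      · exact h1 (E.trans z _ _ _ hz h')
  obtain ⟨q, hq⟩ := hbc.2.1
  -- An agent gaining from `c` to `b` still gains from `c` to `a`.
  have hqa : E.W q (c q) (a q) := by
    by_cases h : a q = b q
    · exact h ▸ hq
    · rcases E.total q _ _ h with h' | h'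
      · exact (hab.2.2 q h').elim
      · exact E.trans q _ _ _ hq h'
  refine ⟨?_, ⟨q, hqa⟩, key⟩
  rintro rfl
  exact E.asymm q _ _ hqa hqa

/-- Every distribution is weakly dominated by a Pareto optimal distribution. -/
theorem exists_pareto_optimal_above
    {n : ℕ} {R : Type*} [Fintype R] [DecidableEq R] (E : Economy n R)
    (d : Fin n → Finset R) (hd : IsDistribution d) :
    ∃ e : Fin n → Finset R, IsDistribution e ∧ ParetoOptimal E e ∧
      (e = d ∨ ParetoDominates E e d) := by
  let r : (Fin n → Finset R) → (Fin n → Finset R) → Prop := ParetoDominates E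
  have : IsTrans _ r := ⟨fun _ _ _ => ParetoDominates.trans⟩
  have : Std.Irrefl r := ⟨fun _ h => h.1 rfl⟩
  have hwf : WellFounded r := Finite.wellFounded_of_trans_of_irrefl r
  obtain ⟨e, ⟨he, hed⟩, hmax⟩ := hwf.has_min
    {e | IsDistribution e ∧ (e = d ∨ ParetoDominates E e d)} ⟨d, hd, Or.inl rfl⟩
  refine ⟨e, he, fun f hf hfe => hmax f ⟨hf, Or.inr ?_⟩ hfe, hed⟩
  rcases hed with rfl | hed
  · exact hfe
  · exact hfe.trans hed
end

section
/- (The Coase Theorem) In any economy, every ideal trajectory converges in finitely many steps to a Pareto optimal distribution: for every ideal trajectory I there exists t ∈ ℕ such that for all k ∈ ℕ, I (t+k) = I t, and the distribution I t is Pareto optimal. -/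
theorem ParetoDominates.irrefl {n : ℕ} {R : Type*} (E : Economy n R)
    (d : Fin n → Finset R) : ¬ ParetoDominates E d d :=
  fun h => h.1 rfl

/-- The Coase Theorem: every ideal trajectory converges in finitely many steps
to a Pareto optimal distribution. -/
theorem coase_theorem
    {n : ℕ} {R : Type*} [Fintype R] [DecidableEq R]
    (E : Economy n R) (I : ℕ → Fin n → Finset R)
    (hI : IdealTrajectory E I) :
    ∃ t, (∀ k, I (t+k) = I t) ∧ ParetoOptimal E (I t) := by
  have : IsTrans (Fin n → Finset R) (ParetoDominates E) := ⟨fun _ _ _ h h' => h.trans h'⟩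
  have : Std.Irrefl (ParetoDominates E) := ⟨ParetoDominates.irrefl E⟩
  have hwf : WellFounded (ParetoDominates E) := Finite.wellFounded_of_trans_of_irrefl _
  obtain ⟨_, ⟨t, rfl⟩, hmin⟩ := hwf.has_min (Set.range I) ⟨I 0, 0, rfl⟩
  have hopt : ParetoOptimal E (I t) := fun d hd hdom =>
    hmin (I (t + 1)) ⟨t + 1, rfl⟩ ((hI.2 t).1 ⟨d, hd, hdom⟩)
  refine ⟨t, fun k => ?_, hopt⟩
  induction k with
  | zero => rfl
  | succ k ih =>
    rw [← add_assoc, (hI.2 (t + k)).2 (ih ▸ hopt), ih]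
end
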